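/- For every s with 0<s≤1, lim_{m→∞} Π_m{ n ≤ p_m^s } = lim_{m→∞} Σ_{n∈Ω_m, n≤p_m^s} π_m(n) = e^{−γ}·s. -/

import Mathlib

open Filter
open scoped Topology

noncomputable section

/-- The `j`-th prime number, `0`-indexed: `nthPrime 0 = 2`, `nthPrime 1 = 3`, … -/
def nthPrime (j : ℕ) : ℕ := Nat.nth Nat.Prime j

/-- The partition function `Z_m = ∏_{j=1}^m (1 + 1/p_j)`. -/
def Zm (m : ℕ) : ℝ := ∏ j ∈ Finset.range m, (1 + 1 / (nthPrime j : ℝ))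

/-- The element `n = ∏_{j=1}^m p_j^{ν_j}` of `Ω_m` parametrized by `ν ∈ {0,1}^m`. -/
def elt (m : ℕ) (ν : Fin m → Bool) : ℕ := ∏ j : Fin m, if ν j then nthPrime j else 1

/-- The mass `π_m(n) = 1/(Z_m n)`. -/
def mass (m : ℕ) (ν : Fin m → Bool) : ℝ := 1 / (Zm m * (elt m ν : ℝ))

/-!
For `0 ≤ x ≤ p_m` the elements `n ≤ x` of `Ω_m` are exactly the squarefree integers up to `x`, so
`Π_m {n ≤ x} = Q(x) / Z_m`, where `Q(x)` is the sum of `1/n` over squarefree `n ≤ x`. With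
`x = p_m ^ s` the claim follows from `Q(x) ~ (6/π²) log x` and `Z_m ~ (6/π²) e^γ log p_m`.

Writing `n = b² a` with `a` squarefree gives `H_N = ∑_b Q(N/b²)/b²`, and `Q(N) - Q(N/b²)` is at
most `1 + 2 log b`; hence `ζ(2) Q(N) = H_N + O(1)`.

Since `1 + 1/p = (1 - 1/p)⁻¹ (1 - 1/p²)`, the second asymptotic is the third theorem of Mertens. The
estimate `∑_{p ≤ N} (log p)/p = log N + O(1)`, obtained from `log N!`, and partial summation give
`∑_{p ≤ N} -log (1 - 1/p) = log log N + M + o(1)`. To see that `M = γ`, compare with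
`∑_{n ≤ t} 1/n = log t + γ + o(1)`: after `t = log N` the two sums have Laplace transforms
`log ζ(1+σ) + o(1)` and `-log (1 - e^{-σ})`, both `-log σ + o(1)` as `σ → 0⁺`, and a difference of
summatory functions with a limit has a Laplace transform with the same limit.
-/

section SquarefreeHarmonic

/-- The squarefree harmonic sum `∑ 1/n` over the squarefree `1 ≤ n ≤ N`; the event
`{n ≤ x}` has `Π_m`-probability `squarefreeHarmonic ⌊x⌋₊ / Zm m` for `x` up to the last prime. -/
def squarefreeHarmonic (N : ℕ) : ℝ := ∑ n ∈ Finset.Icc 1 N with Squarefree n, (n : ℝ)⁻¹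

lemma squarefreeHarmonic_zero : squarefreeHarmonic 0 = 0 := by simp [squarefreeHarmonic]

lemma squarefreeHarmonic_mono : Monotone squarefreeHarmonic := fun _ _ h ↦
  Finset.sum_le_sum_of_subset_of_nonneg
    (Finset.filter_subset_filter _ (Finset.Icc_subset_Icc_right h)) fun _ _ _ ↦ by positivity

lemma squarefreeHarmonic_sub_le_harmonic_sub {M N : ℕ} (h : M ≤ N) :
    squarefreeHarmonic N - squarefreeHarmonic M ≤ harmonic N - harmonic M := by
  have hmono : Monotone fun N : ℕ ↦ (harmonic N : ℝ) - squarefreeHarmonic N := by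
    refine monotone_nat_of_le_succ fun N ↦ ?_
    have hstep : (if Squarefree (N + 1) then ((N + 1 : ℕ) : ℝ)⁻¹ else 0) ≤ ((N + 1 : ℕ) : ℝ)⁻¹ := by
      split_ifs
      exacts [le_rfl, by positivity]
    simp only [squarefreeHarmonic, Finset.sum_filter, harmonic_succ, Rat.cast_add, Rat.cast_inv,
      Rat.cast_natCast, Finset.sum_Icc_succ_top (Nat.le_add_left 1 N)]
    linarith
  have := hmono h
  dsimp only at this
  linarith

lemma harmonic_sub_harmonic_div_le (N : ℕ) {k : ℕ} (hk : 0 < k) :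
    (harmonic N - harmonic (N / k) : ℝ) ≤ 1 + Real.log k := by
  rcases N.eq_zero_or_pos with rfl | hN
  · simpa using add_nonneg zero_le_one (Real.log_natCast_nonneg k)
  have hupper := harmonic_le_one_add_log N
  have hlower := log_le_harmonic_floor ((N : ℝ) / k) (by positivity)
  rw [Nat.floor_div_eq_div, Real.log_div (by positivity) (by positivity)] at hlower
  linarith

lemma dvd_of_sq_dvd_sq_mul_squarefree {a b d : ℕ} (ha : Squarefree a) (h : d ^ 2 ∣ b ^ 2 * a) :
    d ∣ b := by
  rcases b.eq_zero_or_pos with rfl | hb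
  · exact dvd_zero d
  have hba : b ^ 2 * a ≠ 0 := mul_ne_zero (by positivity) ha.ne_zero
  have hd : d ≠ 0 := by rintro rfl; exact hba (by simpa using h)
  rw [← Nat.factorization_le_iff_dvd (by positivity) hba,
    Nat.factorization_mul (by positivity) ha.ne_zero, Nat.factorization_pow,
    Nat.factorization_pow] at h
  rw [← Nat.factorization_le_iff_dvd hd hb.ne']
  intro p
  have hp := h p
  have hap := ha.natFactorization_le_one p
  simp only [Finsupp.smul_apply, Finsupp.add_apply, smul_eq_mul] at hp
  lia

lemma sq_mul_squarefree_injective {a b a' b' : ℕ} (ha : Squarefree a) (ha' : Squarefree a')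
    (hb : 0 < b) (h : b ^ 2 * a = b' ^ 2 * a') : b = b' ∧ a = a' := by
  obtain rfl : b = b' := Nat.dvd_antisymm
    (dvd_of_sq_dvd_sq_mul_squarefree ha' (h ▸ dvd_mul_right _ _))
    (dvd_of_sq_dvd_sq_mul_squarefree ha (h ▸ dvd_mul_right _ _))
  exact ⟨rfl, Nat.eq_of_mul_eq_mul_left (by positivity) h⟩

-- Every `n ≥ 1` is uniquely `b² a` with `a` squarefree.
lemma harmonic_eq_sum_squarefreeHarmonic_div (N : ℕ) :
    (harmonic N : ℝ) = ∑ b ∈ Finset.Icc 1 N, squarefreeHarmonic (N / b ^ 2) / (b : ℝ) ^ 2 := by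
  simp only [harmonic_eq_sum_Icc, Rat.cast_sum, Rat.cast_inv, Rat.cast_natCast,
    squarefreeHarmonic, Finset.sum_div]
  rw [Finset.sum_sigma']
  symm
  refine Finset.sum_bij (fun x _ ↦ x.1 ^ 2 * x.2) ?_ ?_ ?_ ?_
  · rintro ⟨b, a⟩ hx
    simp only [Finset.mem_sigma, Finset.mem_filter, Finset.mem_Icc] at hx ⊢
    obtain ⟨⟨hb, -⟩, ⟨ha, haN⟩, -⟩ := hx
    exact ⟨Nat.mul_pos (pow_pos hb 2) ha,
      by rwa [mul_comm, ← Nat.le_div_iff_mul_le (by positivity)]⟩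
  · rintro ⟨b, a⟩ hx ⟨b', a'⟩ hx' h
    simp only [Finset.mem_sigma, Finset.mem_filter, Finset.mem_Icc] at hx hx'
    obtain ⟨rfl, rfl⟩ := sq_mul_squarefree_injective hx.2.2 hx'.2.2 hx.1.1 h
    rfl
  · intro n hn
    obtain ⟨hn1, hnN⟩ := Finset.mem_Icc.1 hn
    obtain ⟨a, b, ha, hb, hab, hsq⟩ := Nat.sq_mul_squarefree_of_pos hn1
    have hbn : b ≤ b ^ 2 * a := by nlinarith [Nat.mul_pos hb ha]
    refine ⟨⟨b, a⟩, ?_, hab⟩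
    simp only [Finset.mem_sigma, Finset.mem_filter, Finset.mem_Icc]
    refine ⟨⟨hb, by lia⟩, ⟨ha, ?_⟩, hsq⟩
    rw [Nat.le_div_iff_mul_le (by positivity)]
    lia
  · rintro ⟨b, a⟩ -
    push_cast
    field_simp

lemma hasSum_squarefreeHarmonic_div (N : ℕ) :
    HasSum (fun b : ℕ ↦ squarefreeHarmonic (N / b ^ 2) / (b : ℝ) ^ 2) (harmonic N) := by
  rw [harmonic_eq_sum_squarefreeHarmonic_div]
  refine hasSum_sum_of_ne_finset_zero fun b hb ↦ ?_
  rcases b.eq_zero_or_pos with rfl | hb0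
  · simp
  have hNb : N < b := by simp only [Finset.mem_Icc] at hb; lia
  rw [Nat.div_eq_of_lt (by nlinarith), squarefreeHarmonic_zero, zero_div]

lemma summable_log_div_sq : Summable fun n : ℕ ↦ Real.log n / (n : ℝ) ^ 2 := by
  have hdom : Summable fun n : ℕ ↦ 2 * (n : ℝ) ^ (-(3 / 2) : ℝ) :=
    (Real.summable_nat_rpow.2 (by norm_num)).mul_left 2
  refine hdom.of_nonneg_of_le
    (fun n ↦ div_nonneg (Real.log_natCast_nonneg n) (by positivity)) fun n ↦ ?_
  rcases n.eq_zero_or_pos with rfl | hn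
  · simp
  have hn' : (0 : ℝ) < n := by exact_mod_cast hn
  calc Real.log n / (n : ℝ) ^ 2 ≤ (n : ℝ) ^ (1 / 2 : ℝ) / (1 / 2) / (n : ℝ) ^ 2 := by
        gcongr
        exact Real.log_le_rpow_div hn'.le (by norm_num)
    _ = 2 * ((n : ℝ) ^ (1 / 2 : ℝ) / (n : ℝ) ^ (2 : ℝ)) := by rw [Real.rpow_two]; ring
    _ = 2 * (n : ℝ) ^ (-(3 / 2) : ℝ) := by rw [← Real.rpow_sub hn']; norm_num

lemma exists_abs_squarefreeHarmonic_sub_harmonic_le :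
    ∃ C, ∀ N : ℕ, |Real.pi ^ 2 / 6 * squarefreeHarmonic N - harmonic N| ≤ C := by
  have hdom := hasSum_zeta_two.add (summable_log_div_sq.hasSum.mul_left 2)
  refine ⟨Real.pi ^ 2 / 6 + 2 * ∑' n : ℕ, Real.log n / (n : ℝ) ^ 2, fun N ↦ ?_⟩
  have hdiff := (hasSum_zeta_two.mul_right (squarefreeHarmonic N)).sub
    (hasSum_squarefreeHarmonic_div N)
  have hterm (b : ℕ) : 1 / (b : ℝ) ^ 2 * squarefreeHarmonic N -
      squarefreeHarmonic (N / b ^ 2) / (b : ℝ) ^ 2 =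
      (squarefreeHarmonic N - squarefreeHarmonic (N / b ^ 2)) / (b : ℝ) ^ 2 := by ring
  simp only [hterm] at hdiff
  rw [abs_of_nonneg <| hdiff.nonneg fun b ↦
    div_nonneg (sub_nonneg.2 (squarefreeHarmonic_mono (Nat.div_le_self _ _))) (by positivity)]
  refine hasSum_le (fun b ↦ ?_) hdiff hdom
  rcases b.eq_zero_or_pos with rfl | hb
  · simp
  calc (squarefreeHarmonic N - squarefreeHarmonic (N / b ^ 2)) / (b : ℝ) ^ 2
      ≤ (1 + Real.log (b ^ 2 : ℕ)) / (b : ℝ) ^ 2 := by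
        gcongr
        exact (squarefreeHarmonic_sub_le_harmonic_sub (Nat.div_le_self _ _)).trans
          (harmonic_sub_harmonic_div_le N (pow_pos hb 2))
    _ = 1 / (b : ℝ) ^ 2 + 2 * (Real.log b / (b : ℝ) ^ 2) := by
        rw [Nat.cast_pow, Real.log_pow]; push_cast; ring

lemma tendsto_squarefreeHarmonic_floor_div_log :
    Tendsto (fun x : ℝ ↦ squarefreeHarmonic ⌊x⌋₊ / Real.log x) atTop (𝓝 (6 / Real.pi ^ 2)) := by
  obtain ⟨C, hC⟩ := exists_abs_squarefreeHarmonic_sub_harmonic_le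
  have hbdd : ∀ᶠ x : ℝ in atTop,
      |Real.pi ^ 2 / 6 * squarefreeHarmonic ⌊x⌋₊ - Real.log x| ≤ C + 1 := by
    filter_upwards [eventually_ge_atTop 1] with x hx
    have hlower := log_le_harmonic_floor x (by linarith)
    have hupper := harmonic_floor_le_one_add_log x hx
    have := abs_le.1 (hC ⌊x⌋₊)
    exact abs_le.2 ⟨by linarith, by linarith⟩
  have hratio : Tendsto (fun x : ℝ ↦
      (Real.pi ^ 2 / 6 * squarefreeHarmonic ⌊x⌋₊ - Real.log x) / Real.log x) atTop (𝓝 0) :=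
    tendsto_bdd_div_atTop_nhds_zero (hbdd.mono fun _ h ↦ (abs_le.1 h).1)
      (hbdd.mono fun _ h ↦ (abs_le.1 h).2) Real.tendsto_log_atTop
  have hlim := (hratio.add_const 1).const_mul (6 / Real.pi ^ 2)
  rw [zero_add, mul_one] at hlim
  refine hlim.congr' ?_
  filter_upwards [eventually_gt_atTop 1] with x hx
  have := (Real.log_pos hx).ne'
  have := Real.pi_ne_zero
  field_simp
  ring

end SquarefreeHarmonic

section PartialSummation

variable {L : ℕ → ℝ} {B : ℝ}

lemma sub_div_le_log_sub_log {x y : ℝ} (hx : 0 < x) (hy : 0 < y) :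
    (y - x) / y ≤ Real.log y - Real.log x := by
  have h := Real.one_sub_inv_le_log_of_pos (div_pos hy hx)
  rw [Real.log_div hy.ne' hx.ne', inv_div] at h
  calc (y - x) / y = 1 - x / y := by field_simp
    _ ≤ _ := h

lemma log_sub_log_sub_div_le {x y : ℝ} (hx : 0 < x) (hy : 0 < y) :
    Real.log y - Real.log x - (y - x) / y ≤ (y - x) * (1 / x - 1 / y) := by
  have h := sub_div_le_log_sub_log hy hx
  calc Real.log y - Real.log x - (y - x) / y ≤ -((x - y) / x) - (y - x) / y := by linarith
    _ = (y - x) * (1 / x - 1 / y) := by ring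

lemma exists_tendsto_sum_sub_div_sub_log (hL : Monotone L) (hL0 : 0 < L 0)
    (hB : ∀ n, L (n + 1) - L n ≤ B) :
    ∃ M, Tendsto (fun N ↦ ∑ i ∈ Finset.range N, (L (i + 1) - L i) / L (i + 1) - Real.log (L N))
      atTop (𝓝 M) := by
  have hpos (n : ℕ) : 0 < L n := hL0.trans_le (hL n.zero_le)
  have hB0 : 0 ≤ B := (sub_nonneg.2 (hL (Nat.le_succ 0))).trans (hB 0)
  set D : ℕ → ℝ := fun N ↦
    ∑ i ∈ Finset.range N, (L (i + 1) - L i) / L (i + 1) - Real.log (L N)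
  have hstep (n : ℕ) : D (n + 1) - D n =
      (L (n + 1) - L n) / L (n + 1) - (Real.log (L (n + 1)) - Real.log (L n)) := by
    simp only [D, Finset.sum_range_succ]; ring
  have hanti : Antitone D := antitone_nat_of_succ_le fun n ↦ by
    linarith [hstep n, sub_div_le_log_sub_log (hpos n) (hpos (n + 1))]
  have hmono : Monotone fun n ↦ D n - B * (1 / L n) := monotone_nat_of_le_succ fun n ↦ by
    have hgap : (L (n + 1) - L n) * (1 / L n - 1 / L (n + 1)) ≤
        B * (1 / L n - 1 / L (n + 1)) :=
      mul_le_mul_of_nonneg_right (hB n)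
        (sub_nonneg.2 (one_div_le_one_div_of_le (hpos n) (hL n.le_succ)))
    linarith [hstep n, log_sub_log_sub_div_le (hpos n) (hpos (n + 1))]
  refine ⟨_, tendsto_atTop_ciInf hanti ⟨D 0 - B * (1 / L 0), ?_⟩⟩
  rintro _ ⟨n, rfl⟩
  have hnonneg : 0 ≤ B * (1 / L n) := mul_nonneg hB0 (one_div_pos.2 (hpos n)).le
  linarith [hmono n.zero_le]

-- The Dirichlet test applies to the differences `c i - (L (i + 1) - L i)`.
lemma exists_tendsto_sum_div_sub_log (hL : Monotone L) (hL0 : 0 < L 0)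
    (hB : ∀ n, L (n + 1) - L n ≤ B) (htop : Tendsto L atTop atTop) {c : ℕ → ℝ} {C : ℝ}
    (hc : ∀ n, |∑ i ∈ Finset.range n, c i - L n| ≤ C) :
    ∃ M, Tendsto (fun N ↦ ∑ i ∈ Finset.range N, c i / L (i + 1) - Real.log (L N))
      atTop (𝓝 M) := by
  have hanti : Antitone fun n ↦ (L (n + 1))⁻¹ := fun m n h ↦
    inv_anti₀ (hL0.trans_le (hL (Nat.zero_le _))) (hL (Nat.succ_le_succ h))
  have hzero : Tendsto (fun n ↦ (L (n + 1))⁻¹) atTop (𝓝 0) :=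
    ((tendsto_add_atTop_iff_nat 1).2 htop).inv_tendsto_atTop
  have hbdd (n : ℕ) : ‖∑ i ∈ Finset.range n, (c i - (L (i + 1) - L i))‖ ≤ C + |L 0| := by
    rw [Finset.sum_sub_distrib, Finset.sum_range_sub, Real.norm_eq_abs]
    calc |∑ i ∈ Finset.range n, c i - (L n - L 0)|
        = |(∑ i ∈ Finset.range n, c i - L n) + L 0| := by ring_nf
      _ ≤ C + |L 0| := (abs_add_le _ _).trans (by gcongr; exact hc n)
  obtain ⟨M₁, hM₁⟩ := cauchySeq_tendsto_of_complete
    (hanti.cauchySeq_series_mul_of_tendsto_zero_of_bounded hzero hbdd)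
  obtain ⟨M₂, hM₂⟩ := exists_tendsto_sum_sub_div_sub_log hL hL0 hB
  refine ⟨M₁ + M₂, (hM₁.add hM₂).congr fun N ↦ ?_⟩
  rw [← add_sub_assoc, ← Finset.sum_add_distrib]
  congr 1
  exact Finset.sum_congr rfl fun i _ ↦ by rw [smul_eq_mul]; ring

end PartialSummation

section MertensWeights

lemma log_factorial_le (N : ℕ) : Real.log N.factorial ≤ N * Real.log N := by
  rw [← Real.log_pow]
  exact Real.log_le_log (by exact_mod_cast N.factorial_pos) (by exact_mod_cast N.factorial_le_pow)

lemma mul_log_sub_le_log_factorial (N : ℕ) : N * Real.log N - N ≤ Real.log N.factorial := by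
  rcases N.eq_zero_or_pos with rfl | hN
  · simp
  have hexp := Real.log_le_log (by positivity) (Real.pow_div_factorial_le_exp N N.cast_nonneg N)
  rw [Real.log_exp, Real.log_div (by positivity) (by positivity), Real.log_pow] at hexp
  linarith

lemma log_factorial_eq_sum_primesLE (N : ℕ) :
    Real.log N.factorial =
      ∑ p ∈ N.primesLE, (N.factorial.factorization p : ℝ) * Real.log p := by
  have hsupport : N.factorial.factorization.support ⊆ N.primesLE := fun p hp ↦ by
    obtain ⟨hprime, hdvd, -⟩ := Nat.mem_primeFactors.1 hp
    exact Nat.mem_primesLE.2 ⟨hprime.dvd_factorial.1 hdvd, hprime⟩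
  rw [Real.log_nat_eq_sum_factorization, Finsupp.sum_of_support_subset _ hsupport]
  simp

lemma div_sub_one_le_factorization_factorial (N : ℕ) {p : ℕ} (hp : p.Prime) :
    (N : ℝ) / p - 1 ≤ N.factorial.factorization p := by
  have hdiv : N / p ≤ N.factorial.factorization p := by
    rw [Nat.factorization_factorial hp (b := Nat.log p N + 2) (by lia)]
    simpa using Finset.single_le_sum (f := fun i ↦ N / p ^ i) (fun _ _ ↦ Nat.zero_le _)
      (show 1 ∈ Finset.Ico 1 (Nat.log p N + 2) by simp)
  have hfloor : (N : ℝ) / p < (N / p : ℕ) + 1 := by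
    rw [← Nat.floor_div_eq_div (K := ℝ)]
    exact Nat.lt_floor_add_one _
  have hdiv' : ((N / p : ℕ) : ℝ) ≤ N.factorial.factorization p := by exact_mod_cast hdiv
  linarith

lemma factorization_factorial_le_div_sub_one (N : ℕ) {p : ℕ} (hp : p.Prime) :
    (N.factorial.factorization p : ℝ) ≤ N / (p - 1) := by
  have hmul : (p - 1) * N.factorial.factorization p ≤ N := by
    have := Fact.mk hp
    rw [Nat.factorization_def _ hp, sub_one_mul_padicValNat_factorial]
    exact Nat.sub_le _ _
  have hp1 : (1 : ℝ) < p := by exact_mod_cast hp.one_lt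
  rw [le_div_iff₀ (by linarith), mul_comm, ← Nat.cast_pred hp.pos]
  exact_mod_cast hmul

lemma sum_primesLE_log_div_le {N : ℕ} (hN : 0 < N) :
    ∑ p ∈ N.primesLE, Real.log p / p ≤ Real.log N + Real.log 4 := by
  have htheta : ∑ p ∈ N.primesLE, Real.log p ≤ Real.log 4 * N := by
    rw [← Chebyshev.theta_eq_sum_primesLE_log]
    exact Chebyshev.theta_le_log4_mul_x N.cast_nonneg
  have hfactorial : ∑ p ∈ N.primesLE, ((N : ℝ) / p - 1) * Real.log p ≤ N * Real.log N := by
    refine le_trans ?_ (log_factorial_le N)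
    rw [log_factorial_eq_sum_primesLE]
    exact Finset.sum_le_sum fun p hp ↦ mul_le_mul_of_nonneg_right
      (div_sub_one_le_factorization_factorial N (Nat.prime_of_mem_primesLE hp))
      (Real.log_natCast_nonneg p)
  have hN' : (0 : ℝ) < N := by exact_mod_cast hN
  refine le_of_mul_le_mul_left ?_ hN'
  calc N * ∑ p ∈ N.primesLE, Real.log p / p
      = ∑ p ∈ N.primesLE, ((N : ℝ) / p - 1) * Real.log p + ∑ p ∈ N.primesLE, Real.log p := by
        rw [Finset.mul_sum, ← Finset.sum_add_distrib]
        exact Finset.sum_congr rfl fun p _ ↦ by ring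
    _ ≤ N * (Real.log N + Real.log 4) := by linarith

lemma log_sub_one_le_sum_primesLE_log_div_sub_one {N : ℕ} (hN : 0 < N) :
    Real.log N - 1 ≤ ∑ p ∈ N.primesLE, Real.log p / (p - 1) := by
  have hN' : (0 : ℝ) < N := by exact_mod_cast hN
  refine le_of_mul_le_mul_left ?_ hN'
  calc N * (Real.log N - 1) = N * Real.log N - N := by ring
    _ ≤ Real.log N.factorial := mul_log_sub_le_log_factorial N
    _ = ∑ p ∈ N.primesLE, (N.factorial.factorization p : ℝ) * Real.log p :=
        log_factorial_eq_sum_primesLE N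
    _ ≤ ∑ p ∈ N.primesLE, (N : ℝ) / (p - 1) * Real.log p :=
        Finset.sum_le_sum fun p hp ↦ mul_le_mul_of_nonneg_right
          (factorization_factorial_le_div_sub_one N (Nat.prime_of_mem_primesLE hp))
          (Real.log_natCast_nonneg p)
    _ = N * ∑ p ∈ N.primesLE, Real.log p / (p - 1) := by
        rw [Finset.mul_sum]
        exact Finset.sum_congr rfl fun p _ ↦ by ring

lemma sum_primesLE_log_div_sub_one_sub_le (N : ℕ) :
    ∑ p ∈ N.primesLE, (Real.log p / (p - 1) - Real.log p / p) ≤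
      2 * ∑' n : ℕ, Real.log n / (n : ℝ) ^ 2 := by
  rw [← tsum_mul_left]
  refine (Finset.sum_le_sum fun p hp ↦ ?_).trans
    ((summable_log_div_sq.mul_left 2).sum_le_tsum N.primesLE fun n _ ↦
      mul_nonneg zero_le_two (div_nonneg (Real.log_natCast_nonneg n) (by positivity)))
  have hp2 : (2 : ℝ) ≤ p := by exact_mod_cast Nat.two_le_of_mem_primesLE hp
  have hinv : 1 / ((p : ℝ) - 1) - 1 / p ≤ 2 * (1 / (p : ℝ) ^ 2) := by
    rw [div_sub_div _ _ (by linarith) (by linarith), mul_one_div,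
      div_le_div_iff₀ (mul_pos (by linarith) (by linarith)) (by positivity)]
    nlinarith
  calc Real.log p / (p - 1) - Real.log p / p
      = Real.log p * (1 / ((p : ℝ) - 1) - 1 / p) := by ring
    _ ≤ Real.log p * (2 * (1 / (p : ℝ) ^ 2)) :=
        mul_le_mul_of_nonneg_left hinv (Real.log_natCast_nonneg p)
    _ = 2 * (Real.log p / (p : ℝ) ^ 2) := by ring

lemma exists_abs_sum_primesLE_mul_log_sub_log_le {w : ℕ → ℝ}
    (hlower : ∀ p : ℕ, p.Prime → 1 / (p : ℝ) ≤ w p)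
    (hupper : ∀ p : ℕ, p.Prime → w p ≤ 1 / ((p : ℝ) - 1)) :
    ∃ C, ∀ N : ℕ, 0 < N → |∑ p ∈ N.primesLE, w p * Real.log p - Real.log N| ≤ C := by
  set S := 2 * ∑' n : ℕ, Real.log n / (n : ℝ) ^ 2
  refine ⟨S + 1 + Real.log 4, fun N hN ↦ ?_⟩
  have hge : ∑ p ∈ N.primesLE, Real.log p / p ≤ ∑ p ∈ N.primesLE, w p * Real.log p :=
    Finset.sum_le_sum fun p hp ↦ (one_div_mul_eq_div _ _).symm.trans_le <|
      mul_le_mul_of_nonneg_right (hlower p (Nat.prime_of_mem_primesLE hp))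
        (Real.log_natCast_nonneg p)
  have hle : ∑ p ∈ N.primesLE, w p * Real.log p ≤ ∑ p ∈ N.primesLE, Real.log p / (p - 1) :=
    Finset.sum_le_sum fun p hp ↦ (mul_le_mul_of_nonneg_right
      (hupper p (Nat.prime_of_mem_primesLE hp)) (Real.log_natCast_nonneg p)).trans_eq
        (one_div_mul_eq_div _ _)
  have hgap := sum_primesLE_log_div_sub_one_sub_le N
  rw [Finset.sum_sub_distrib] at hgap
  have hinf := log_sub_one_le_sum_primesLE_log_div_sub_one hN
  have hsup := sum_primesLE_log_div_le hN
  have hlog4 : 0 ≤ Real.log 4 := Real.log_nonneg (by norm_num)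
  exact abs_le.2 ⟨by linarith, by linarith⟩

lemma sum_primesLE_add_two (f : ℕ → ℝ) (N : ℕ) :
    ∑ p ∈ (N + 2).primesLE, f p =
      f 2 + ∑ i ∈ Finset.range N, if (i + 3).Prime then f (i + 3) else 0 := by
  have hf2 : ∑ p ∈ Finset.range 3, (if p.Prime then f p else 0) = f 2 := by
    simp [Finset.sum_range_succ, Nat.prime_two, Nat.not_prime_zero, Nat.not_prime_one]
  rw [Nat.primesLE_eq_filter_range, Finset.sum_filter, show N + 2 + 1 = 3 + N by lia,
    Finset.sum_range_add, hf2]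
  simp only [add_comm 3]

-- Partial summation with the weights `w p * log p` against `1 / log p`.
lemma exists_tendsto_sum_primesLE_sub_log_log {w : ℕ → ℝ}
    (hlower : ∀ p : ℕ, p.Prime → 1 / (p : ℝ) ≤ w p)
    (hupper : ∀ p : ℕ, p.Prime → w p ≤ 1 / ((p : ℝ) - 1)) :
    ∃ M, Tendsto (fun N : ℕ ↦ ∑ p ∈ N.primesLE, w p - Real.log (Real.log N)) atTop (𝓝 M) := by
  obtain ⟨C, hC⟩ := exists_abs_sum_primesLE_mul_log_sub_log_le hlower hupper
  have hmono : Monotone fun n : ℕ ↦ Real.log (n + 2 : ℕ) := fun m n h ↦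
    Real.log_le_log (by positivity) (by exact_mod_cast Nat.add_le_add_right h 2)
  have hstep (n : ℕ) : Real.log (n + 1 + 2 : ℕ) - Real.log (n + 2 : ℕ) ≤ 1 := by
    rw [← Real.log_div (by positivity) (by positivity)]
    refine (Real.log_le_sub_one_of_pos (by positivity)).trans ?_
    rw [sub_le_iff_le_add, div_le_iff₀ (by positivity)]
    push_cast
    linarith
  have htop : Tendsto (fun n : ℕ ↦ Real.log (n + 2 : ℕ)) atTop atTop :=
    Real.tendsto_log_atTop.comp <| tendsto_natCast_atTop_atTop.comp (tendsto_add_atTop_nat 2)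
  have hbdd (n : ℕ) : |∑ i ∈ Finset.range n, (if (i + 3).Prime
      then w (i + 3) * Real.log (i + 3 : ℕ) else 0) - Real.log (n + 2 : ℕ)| ≤
      C + |w 2 * Real.log (2 : ℕ)| := by
    have h := sum_primesLE_add_two (fun p ↦ w p * Real.log p) n
    rw [← sub_eq_iff_eq_add'] at h
    rw [← h, sub_right_comm]
    exact (abs_sub _ _).trans (by gcongr; exact hC (n + 2) (by lia))
  obtain ⟨M, hM⟩ := exists_tendsto_sum_div_sub_log hmono (Real.log_pos (by norm_num))
    hstep htop hbdd
  refine ⟨w 2 + M, (tendsto_add_atTop_iff_nat 2).1 ((hM.const_add (w 2)).congr fun N ↦ ?_)⟩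
  rw [sum_primesLE_add_two, ← add_sub_assoc]
  congr 2
  refine Finset.sum_congr rfl fun i _ ↦ ?_
  have hlog : Real.log (i + 1 + 2 : ℕ) ≠ 0 :=
    (Real.log_pos (by exact_mod_cast (by lia : 1 < i + 1 + 2))).ne'
  split_ifs
  · exact mul_div_cancel_right₀ _ hlog
  · exact zero_div _

end MertensWeights

section AbelianTheorem

open MeasureTheory

lemma tendsto_integral_comp_div_mul_exp_neg {F : ℝ → ℝ} {C L : ℝ} (hF : Measurable F)
    (hbdd : ∀ t, 0 ≤ t → |F t| ≤ C) (hlim : Tendsto F atTop (𝓝 L)) :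
    Tendsto (fun σ : ℝ ↦ ∫ v in Set.Ioi (0 : ℝ), F (v / σ) * Real.exp (-v)) (𝓝[>] 0) (𝓝 L) := by
  have hL : ∫ v in Set.Ioi (0 : ℝ), L * Real.exp (-v) = L := by
    rw [integral_const_mul, integral_exp_neg_Ioi_zero, mul_one]
  rw [← hL]
  refine tendsto_integral_filter_of_dominated_convergence (fun v ↦ C * Real.exp (-v))
    (.of_forall fun σ ↦ by fun_prop) ?_ ((integrableOn_exp_neg_Ioi 0).const_mul C) ?_
  · filter_upwards [self_mem_nhdsWithin] with σ (hσ : 0 < σ)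
    filter_upwards [ae_restrict_mem measurableSet_Ioi] with v (hv : 0 < v)
    rw [norm_mul, Real.norm_of_nonneg (Real.exp_pos _).le]
    exact mul_le_mul_of_nonneg_right (hbdd _ (by positivity)) (Real.exp_pos _).le
  · filter_upwards [ae_restrict_mem measurableSet_Ioi] with v (hv : 0 < v)
    have hdiv : Tendsto (fun σ ↦ v / σ) (𝓝[>] 0) atTop :=
      (tendsto_inv_nhdsGT_zero.const_mul_atTop hv).congr fun σ ↦ (div_eq_mul_inv v σ).symm
    exact (hlim.comp hdiv).mul_const _

lemma exists_abs_sub_le_of_monotone_of_tendsto {f g : ℝ → ℝ} {L : ℝ} (hf : Monotone f)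
    (hg : Monotone g) (hlim : Tendsto (fun t ↦ f t - g t) atTop (𝓝 L)) (t₀ : ℝ) :
    ∃ C, ∀ t, t₀ ≤ t → |f t - g t| ≤ C := by
  obtain ⟨T, hT⟩ := eventually_atTop.1 (hlim.eventually (Metric.ball_mem_nhds L one_pos))
  refine ⟨max (|L| + 1) (max (f T - g t₀) (-(f t₀ - g T))), fun t ht ↦ ?_⟩
  rcases le_total T t with hTt | htT
  · refine le_max_of_le_left ?_
    have hclose : |f t - g t - L| < 1 := hT t hTt
    linarith [abs_sub_abs_le_abs_sub (f t - g t) L]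
  · refine le_max_of_le_right (max_le_max ?_ ?_)
    · linarith [hf htT, hg ht]
    · linarith [hf ht, hg htT]

variable {ι κ : Type*} {a l : ι → ℝ} {b k : κ → ℝ} {σ : ℝ}

/-- The summatory function `t ↦ ∑_{l i ≤ t} a i` of weights `a` placed at the points `l`. -/
def summatory (a l : ι → ℝ) (t : ℝ) : ℝ := ∑' i, if l i ≤ t then a i else 0

/-- The general Dirichlet series `σ ↦ ∑ a i * exp (-σ l i)`, i.e. the Laplace transform of the
measure with weights `a` at the points `l`. -/
def laplaceSum (a l : ι → ℝ) (σ : ℝ) : ℝ := ∑' i, a i * Real.exp (-(σ * l i))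

/-- Nonnegative weights `a` at nonnegative points `l` whose Laplace transform is finite at every
`σ > 0`. -/
structure LaplaceSummable (a l : ι → ℝ) : Prop where
  weight_nonneg : ∀ i, 0 ≤ a i
  point_nonneg : ∀ i, 0 ≤ l i
  summable : ∀ σ, 0 < σ → Summable fun i ↦ a i * Real.exp (-(σ * l i))

namespace LaplaceSummable

lemma ite_le_exp_mul (h : LaplaceSummable a l) (hσ : 0 < σ) (t : ℝ) (i : ι) :
    (if l i ≤ t then a i else 0) ≤ Real.exp (σ * t) * (a i * Real.exp (-(σ * l i))) := by
  have ha := h.weight_nonneg i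
  split_ifs with hit
  · calc a i = a i * 1 := (mul_one _).symm
      _ ≤ a i * Real.exp (σ * t - σ * l i) := by
        gcongr
        exact Real.one_le_exp (sub_nonneg.2 (by gcongr))
      _ = Real.exp (σ * t) * (a i * Real.exp (-(σ * l i))) := by
        rw [sub_eq_add_neg, Real.exp_add]; ring
  · positivity

lemma ite_nonneg (h : LaplaceSummable a l) (t : ℝ) (i : ι) : 0 ≤ if l i ≤ t then a i else 0 := by
  split_ifs
  exacts [h.weight_nonneg i, le_rfl]

lemma summatory_nonneg (h : LaplaceSummable a l) (t : ℝ) : 0 ≤ summatory a l t :=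
  tsum_nonneg (h.ite_nonneg t)

lemma summable_ite (h : LaplaceSummable a l) (t : ℝ) :
    Summable fun i ↦ if l i ≤ t then a i else 0 :=
  ((h.summable 1 one_pos).mul_left _).of_nonneg_of_le (h.ite_nonneg t) (h.ite_le_exp_mul one_pos t)

lemma monotone_summatory (h : LaplaceSummable a l) : Monotone (summatory a l) := fun s t hst ↦ by
  refine (h.summable_ite s).tsum_le_tsum (fun i ↦ ?_) (h.summable_ite t)
  split_ifs with hs ht
  exacts [le_rfl, absurd (hs.trans hst) ht, h.weight_nonneg i, le_rfl]

lemma summatory_le_exp_mul_laplaceSum (h : LaplaceSummable a l) (hσ : 0 < σ) (t : ℝ) :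
    summatory a l t ≤ Real.exp (σ * t) * laplaceSum a l σ :=
  ((h.summable_ite t).tsum_le_tsum (h.ite_le_exp_mul hσ t)
    ((h.summable σ hσ).mul_left _)).trans_eq tsum_mul_left

lemma integrableOn_summatory_div_mul_exp_neg (h : LaplaceSummable a l) (hσ : 0 < σ) :
    IntegrableOn (fun v ↦ summatory a l (v / σ) * Real.exp (-v)) (Set.Ioi 0) := by
  have hdom : IntegrableOn (fun v ↦ laplaceSum a l (σ / 2) * Real.exp (-(1 / 2) * v))
      (Set.Ioi 0) :=
    (exp_neg_integrableOn_Ioi 0 (by norm_num)).const_mul _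
  have hmeas := h.monotone_summatory.measurable
  refine hdom.mono' (by fun_prop) (.of_forall fun v ↦ ?_)
  rw [Real.norm_of_nonneg (mul_nonneg (h.summatory_nonneg _) (Real.exp_pos _).le)]
  calc summatory a l (v / σ) * Real.exp (-v)
      ≤ Real.exp (σ / 2 * (v / σ)) * laplaceSum a l (σ / 2) * Real.exp (-v) := by
        gcongr
        exact h.summatory_le_exp_mul_laplaceSum (half_pos hσ) _
    _ = laplaceSum a l (σ / 2) * Real.exp (σ / 2 * (v / σ) + -v) := by rw [Real.exp_add]; ring
    _ = laplaceSum a l (σ / 2) * Real.exp (-(1 / 2) * v) := by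
        congr 2
        field_simp
        ring

lemma integral_summatory_div_mul_exp_neg [Countable ι] (h : LaplaceSummable a l) (hσ : 0 < σ) :
    ∫ v in Set.Ioi (0 : ℝ), summatory a l (v / σ) * Real.exp (-v) = laplaceSum a l σ := by
  set G : ι → ℝ → ℝ := fun i ↦ (Set.Ici (σ * l i)).indicator fun v ↦ a i * Real.exp (-v)
  have hG (v : ℝ) : summatory a l (v / σ) * Real.exp (-v) = ∑' i, G i v := by
    rw [summatory, ← tsum_mul_right]
    simp only [G, Set.indicator_apply, Set.mem_Ici, le_div_iff₀' hσ, ite_mul, zero_mul]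
  have hnonneg (i : ι) (v : ℝ) : 0 ≤ G i v :=
    Set.indicator_nonneg (fun _ _ ↦ mul_nonneg (h.weight_nonneg i) (Real.exp_pos _).le) v
  have hint (i : ι) : IntegrableOn (G i) (Set.Ioi 0) := by
    refine ((integrable_indicator_iff measurableSet_Ici).2 ?_).integrableOn
    rw [integrableOn_Ici_iff_integrableOn_Ioi]
    exact (integrableOn_exp_neg_Ioi _).const_mul _
  have hval (i : ι) : ∫ v in Set.Ioi (0 : ℝ), G i v = a i * Real.exp (-(σ * l i)) := by
    rw [← integral_Ici_eq_integral_Ioi, setIntegral_indicator measurableSet_Ici,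
      Set.inter_eq_right.2 (Set.Ici_subset_Ici.2 (mul_nonneg hσ.le (h.point_nonneg i))),
      integral_Ici_eq_integral_Ioi, integral_const_mul, integral_exp_neg_Ioi]
  have hsum := hasSum_integral_of_summable_integral_norm hint
    (by simpa only [Real.norm_of_nonneg (hnonneg _ _), hval] using h.summable σ hσ)
  simp only [hG, ← hsum.tsum_eq, hval, laplaceSum]

lemma tendsto_laplaceSum_sub [Countable ι] [Countable κ] (ha : LaplaceSummable a l)
    (hb : LaplaceSummable b k) {L : ℝ}
    (hlim : Tendsto (fun t ↦ summatory a l t - summatory b k t) atTop (𝓝 L)) :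
    Tendsto (fun σ ↦ laplaceSum a l σ - laplaceSum b k σ) (𝓝[>] 0) (𝓝 L) := by
  obtain ⟨C, hC⟩ := exists_abs_sub_le_of_monotone_of_tendsto ha.monotone_summatory
    hb.monotone_summatory hlim 0
  refine (tendsto_integral_comp_div_mul_exp_neg
    (ha.monotone_summatory.measurable.sub hb.monotone_summatory.measurable) hC hlim).congr' ?_
  filter_upwards [self_mem_nhdsWithin] with σ hσ
  simp only [Pi.sub_apply, sub_mul]
  rw [integral_sub (ha.integrableOn_summatory_div_mul_exp_neg hσ)
    (hb.integrableOn_summatory_div_mul_exp_neg hσ), ha.integral_summatory_div_mul_exp_neg hσ,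
    hb.integral_summatory_div_mul_exp_neg hσ]

end LaplaceSummable

end AbelianTheorem

section LogEulerProduct

lemma le_neg_log_one_sub {x : ℝ} (hx : x < 1) : x ≤ -Real.log (1 - x) := by
  linarith [Real.log_le_sub_one_of_pos (sub_pos.2 hx)]

lemma neg_log_one_sub_le_div {x : ℝ} (hx : x < 1) : -Real.log (1 - x) ≤ x / (1 - x) := by
  have hx' : 1 - x ≠ 0 := (sub_pos.2 hx).ne'
  calc -Real.log (1 - x) ≤ (1 - x)⁻¹ - 1 := by
        linarith [Real.one_sub_inv_le_log_of_pos (sub_pos.2 hx)]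
    _ = x / (1 - x) := by field_simp; ring

lemma neg_log_one_sub_le_add_sq {x : ℝ} (hx : x ≤ 1 / 2) :
    -Real.log (1 - x) ≤ x + 2 * x ^ 2 := by
  refine (neg_log_one_sub_le_div (by linarith)).trans ?_
  rw [div_le_iff₀ (by linarith)]
  nlinarith [mul_nonneg (sq_nonneg x) (sub_nonneg.2 hx)]

lemma abs_neg_log_one_sub_mul_sub_le {x y : ℝ} (hx0 : 0 ≤ x) (hx : x ≤ 1 / 2) (hy0 : 0 ≤ y)
    (hy : y ≤ 1) : |-Real.log (1 - x * y) - -Real.log (1 - x) * y| ≤ 2 * x ^ 2 := by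
  have hxy : x * y ≤ x := mul_le_of_le_one_right hx0 hy
  have hsq : (x * y) ^ 2 ≤ x ^ 2 := pow_le_pow_left₀ (mul_nonneg hx0 hy0) hxy 2
  have hsqy : x ^ 2 * y ≤ x ^ 2 := mul_le_of_le_one_right (sq_nonneg x) hy
  have hlower := le_neg_log_one_sub (x := x * y) (by linarith)
  have hupper := neg_log_one_sub_le_add_sq (x := x * y) (by linarith)
  have hlower' := mul_le_mul_of_nonneg_right (le_neg_log_one_sub (x := x) (by linarith)) hy0
  have hupper' := mul_le_mul_of_nonneg_right (neg_log_one_sub_le_add_sq hx) hy0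
  exact abs_le.2 ⟨by linarith, by linarith⟩

lemma hasSum_log_of_hasProd {ι : Type*} {f : ι → ℝ} {a : ℝ} (hf : ∀ i, 0 < f i) (ha : a ≠ 0)
    (h : HasProd f a) : HasSum (fun i ↦ Real.log (f i)) (Real.log a) :=
  ((Real.continuousAt_log ha).tendsto.comp h).congr fun _ ↦
    Real.log_prod fun i _ ↦ ne_of_gt (hf i)

/-- The completely multiplicative function `n ↦ n⁻ˢ`, bundled with value `0` at `0` so that the
Euler product applies to it. -/
def oneDivRpowHom (s : ℝ) (hs : s ≠ 0) : ℕ →*₀ ℝ where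
  toFun n := 1 / (n : ℝ) ^ s
  map_zero' := by simp [Real.zero_rpow hs]
  map_one' := by simp
  map_mul' a b := by
    rw [Nat.cast_mul, Real.mul_rpow (by positivity) (by positivity), one_div_mul_one_div]

lemma summable_norm_oneDivRpowHom {s : ℝ} (hs : 1 < s) :
    Summable fun n ↦ ‖oneDivRpowHom s (by positivity) n‖ :=
  (Real.summable_one_div_nat_rpow.2 hs).norm

lemma hasSum_neg_log_one_sub_one_div_primes_rpow {s : ℝ} (hs : 1 < s) :
    HasSum (fun p : Nat.Primes ↦ -Real.log (1 - 1 / (p : ℝ) ^ s))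
      (Real.log (∑' n : ℕ, 1 / (n : ℝ) ^ s)) := by
  have hlt (p : Nat.Primes) : 0 < 1 - 1 / (p : ℝ) ^ s := by
    have hp : (1 : ℝ) < p := by exact_mod_cast p.2.one_lt
    rw [sub_pos, div_lt_one (by positivity)]
    exact Real.one_lt_rpow hp (by linarith)
  have hzeta : 0 < ∑' n : ℕ, 1 / (n : ℝ) ^ s :=
    (Real.summable_one_div_nat_rpow.2 hs).tsum_pos (fun n ↦ by positivity) 1 (by simp)
  have hprod := EulerProduct.eulerProduct_completely_multiplicative_hasProd
    (summable_norm_oneDivRpowHom hs)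
  simpa only [Real.log_inv] using
    hasSum_log_of_hasProd (fun p ↦ inv_pos.2 (hlt p)) hzeta.ne' hprod

lemma tendsto_log_tsum_one_div_rpow_add_log :
    Tendsto (fun σ : ℝ ↦ Real.log (∑' n : ℕ, 1 / (n : ℝ) ^ (1 + σ)) + Real.log σ)
      (𝓝[>] 0) (𝓝 0) := by
  have hshift : Tendsto (fun σ : ℝ ↦ 1 + σ) (𝓝[>] 0) (𝓝[>] 1) := by
    have h : Tendsto (fun σ : ℝ ↦ 1 + σ) (𝓝[>] 0) (𝓝 (1 + 0)) :=
      (continuous_const_add 1).tendsto' _ _ rfl |>.mono_left nhdsWithin_le_nhds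
    rw [add_zero] at h
    refine tendsto_nhdsWithin_iff.2 ⟨h, ?_⟩
    filter_upwards [self_mem_nhdsWithin] with σ (hσ : 0 < σ)
    exact lt_add_of_pos_right 1 hσ
  have hlog := (Real.continuousAt_log one_ne_zero).tendsto.comp
    (tendsto_sub_mul_tsum_nat_rpow.comp hshift)
  rw [Real.log_one] at hlog
  refine hlog.congr' ?_
  filter_upwards [self_mem_nhdsWithin] with σ (hσ : 0 < σ)
  have hzeta : 0 < ∑' n : ℕ, 1 / (n : ℝ) ^ (1 + σ) :=
    (Real.summable_one_div_nat_rpow.2 (by linarith)).tsum_pos (fun n ↦ by positivity) 1 (by simp)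
  simp only [Function.comp, add_sub_cancel_left]
  rw [Real.log_mul hσ.ne' hzeta.ne', add_comm]

/-- The logarithm of the Euler factor `(1 - 1/p)⁻¹` of the zeta function at `s = 1`. -/
def logEulerFactor (p : ℕ) : ℝ := -Real.log (1 - 1 / (p : ℝ))

lemma one_div_le_logEulerFactor {p : ℕ} (hp : p.Prime) : 1 / (p : ℝ) ≤ logEulerFactor p :=
  le_neg_log_one_sub ((div_lt_one (by exact_mod_cast hp.pos)).2 (by exact_mod_cast hp.one_lt))

lemma logEulerFactor_le {p : ℕ} (hp : p.Prime) : logEulerFactor p ≤ 1 / ((p : ℝ) - 1) := by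
  have hp1 : (1 : ℝ) < p := by exact_mod_cast hp.one_lt
  have hp1' : (p : ℝ) - 1 ≠ 0 := by linarith
  refine (neg_log_one_sub_le_div ((div_lt_one (by linarith)).2 hp1)).trans_eq ?_
  field_simp

lemma one_div_rpow_one_add {x : ℝ} (hx : 0 < x) (σ : ℝ) :
    1 / x ^ (1 + σ) = 1 / x * Real.exp (-(σ * Real.log x)) := by
  rw [Real.rpow_add hx, Real.rpow_one, Real.exp_neg, mul_comm σ, ← Real.rpow_def_of_pos hx,
    one_div_mul_eq_div, one_div, mul_inv_rev, div_eq_mul_inv]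

lemma abs_neg_log_one_sub_sub_logEulerFactor_mul_exp_le {σ : ℝ} (hσ : 0 ≤ σ) {p : ℕ}
    (hp : p.Prime) :
    |-Real.log (1 - 1 / (p : ℝ) ^ (1 + σ)) - logEulerFactor p * Real.exp (-(σ * Real.log p))| ≤
      2 * (1 / (p : ℝ)) ^ 2 := by
  rw [one_div_rpow_one_add (by exact_mod_cast hp.pos)]
  refine abs_neg_log_one_sub_mul_sub_le (by positivity)
    (one_div_le_one_div_of_le two_pos (by exact_mod_cast hp.two_le)) (Real.exp_pos _).le ?_
  exact Real.exp_le_one_iff.2 (neg_nonpos.2 (mul_nonneg hσ (Real.log_natCast_nonneg p)))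

lemma summable_primes_two_mul_one_div_sq :
    Summable fun p : Nat.Primes ↦ 2 * (1 / (p : ℝ)) ^ 2 := by
  have h : Summable fun n : ℕ ↦ 2 * (1 / (n : ℝ)) ^ 2 := by
    simpa only [one_div_pow] using hasSum_zeta_two.summable.mul_left 2
  exact h.comp_injective Nat.Primes.coe_nat_injective

lemma summable_neg_log_one_sub_sub_logEulerFactor_mul_exp {σ : ℝ} (hσ : 0 ≤ σ) :
    Summable fun p : Nat.Primes ↦ -Real.log (1 - 1 / (p : ℝ) ^ (1 + σ)) -
      logEulerFactor p * Real.exp (-(σ * Real.log p)) :=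
  .of_norm_bounded summable_primes_two_mul_one_div_sq fun p ↦
    abs_neg_log_one_sub_sub_logEulerFactor_mul_exp_le hσ p.2

lemma tendsto_neg_log_one_sub_sub_logEulerFactor_mul_exp {p : ℕ} (hp : p.Prime) :
    Tendsto (fun σ : ℝ ↦ -Real.log (1 - 1 / (p : ℝ) ^ (1 + σ)) -
      logEulerFactor p * Real.exp (-(σ * Real.log p))) (𝓝[>] 0) (𝓝 0) := by
  have hp1 : (1 : ℝ) < p := by exact_mod_cast hp.one_lt
  have hne : 1 - 1 / (p : ℝ) ^ (1 + (0 : ℝ)) ≠ 0 := by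
    rw [add_zero, Real.rpow_one]
    exact (sub_pos.2 ((div_lt_one (by linarith)).2 hp1)).ne'
  have hrpow : ContinuousAt (fun σ : ℝ ↦ (p : ℝ) ^ (1 + σ)) 0 :=
    continuousAt_const.rpow (by fun_prop) (.inl (by positivity))
  have hlog : ContinuousAt (fun σ : ℝ ↦ Real.log (1 - 1 / (p : ℝ) ^ (1 + σ))) 0 :=
    (continuousAt_const.sub (continuousAt_const.div hrpow (by positivity))).log hne
  have hexp : ContinuousAt (fun σ : ℝ ↦ logEulerFactor p * Real.exp (-(σ * Real.log p))) 0 := by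
    fun_prop
  have hlim := (hlog.fun_neg.fun_sub hexp).tendsto.mono_left (nhdsWithin_le_nhds (s := Set.Ioi 0))
  simpa [logEulerFactor] using hlim

lemma tendsto_tsum_neg_log_one_sub_sub_logEulerFactor_mul_exp :
    Tendsto (fun σ : ℝ ↦ ∑' p : Nat.Primes, (-Real.log (1 - 1 / (p : ℝ) ^ (1 + σ)) -
      logEulerFactor p * Real.exp (-(σ * Real.log p)))) (𝓝[>] 0) (𝓝 0) := by
  have hlim := tendsto_tsum_of_dominated_convergence summable_primes_two_mul_one_div_sq
    (fun p : Nat.Primes ↦ tendsto_neg_log_one_sub_sub_logEulerFactor_mul_exp p.2) <| by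
      filter_upwards [self_mem_nhdsWithin] with σ (hσ : 0 < σ) p
      exact abs_neg_log_one_sub_sub_logEulerFactor_mul_exp_le hσ.le p.2
  rwa [tsum_zero] at hlim

lemma laplaceSummable_logEulerFactor :
    LaplaceSummable (fun p : Nat.Primes ↦ logEulerFactor p) (fun p ↦ Real.log p) where
  weight_nonneg p := le_trans (by positivity) (one_div_le_logEulerFactor p.2)
  point_nonneg p := Real.log_natCast_nonneg p
  summable σ hσ := by
    simpa only [sub_sub_cancel] using
      (hasSum_neg_log_one_sub_one_div_primes_rpow (lt_add_of_pos_right 1 hσ)).summable.sub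
        (summable_neg_log_one_sub_sub_logEulerFactor_mul_exp hσ.le)

lemma tendsto_laplaceSum_logEulerFactor_add_log :
    Tendsto (fun σ ↦ laplaceSum (fun p : Nat.Primes ↦ logEulerFactor p) (fun p ↦ Real.log p) σ +
      Real.log σ) (𝓝[>] 0) (𝓝 0) := by
  have hlim := tendsto_log_tsum_one_div_rpow_add_log.sub
    tendsto_tsum_neg_log_one_sub_sub_logEulerFactor_mul_exp
  rw [sub_zero] at hlim
  refine hlim.congr' ?_
  filter_upwards [self_mem_nhdsWithin] with σ (hσ : 0 < σ)
  have hzeta := hasSum_neg_log_one_sub_one_div_primes_rpow (lt_add_of_pos_right 1 hσ)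
  rw [hzeta.summable.tsum_sub (laplaceSummable_logEulerFactor.summable σ hσ), hzeta.tsum_eq,
    laplaceSum]
  ring

end LogEulerProduct

section MertensThird

lemma tendsto_log_floor_sub_log :
    Tendsto (fun x : ℝ ↦ Real.log ⌊x⌋₊ - Real.log x) atTop (𝓝 0) := by
  have hlog := (Real.continuousAt_log one_ne_zero).tendsto.comp
    (tendsto_nat_floor_div_atTop (R := ℝ))
  rw [Real.log_one] at hlog
  refine hlog.congr' ?_
  filter_upwards [eventually_ge_atTop 1] with x hx
  have hfloor : ((⌊x⌋₊ : ℕ) : ℝ) ≠ 0 := by exact_mod_cast (Nat.floor_pos.2 hx).ne'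
  exact Real.log_div hfloor (by positivity)

lemma tendsto_log_log_floor_exp_sub_log :
    Tendsto (fun t : ℝ ↦ Real.log (Real.log ⌊Real.exp t⌋₊) - Real.log t) atTop (𝓝 0) := by
  have hratio : Tendsto (fun t : ℝ ↦ (Real.log ⌊Real.exp t⌋₊ - t) / t + 1) atTop (𝓝 1) := by
    have h := (tendsto_log_floor_sub_log.comp Real.tendsto_exp_atTop).div_atTop tendsto_id
    simpa only [Function.comp, Real.log_exp, id, zero_add] using h.add_const 1
  have hlog := (Real.continuousAt_log one_ne_zero).tendsto.comp hratio
  rw [Real.log_one] at hlog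
  refine hlog.congr' ?_
  filter_upwards [eventually_ge_atTop 1] with t ht
  have hfloor : 1 < ⌊Real.exp t⌋₊ :=
    Nat.le_floor (by push_cast; linarith [Real.add_one_le_exp t])
  have hpos : 0 < Real.log ⌊Real.exp t⌋₊ := Real.log_pos (by exact_mod_cast hfloor)
  rw [← Real.log_div hpos.ne' (by positivity), Function.comp, sub_div, div_self (by positivity),
    sub_add_cancel]

lemma tendsto_harmonic_floor_sub_log :
    Tendsto (fun t : ℝ ↦ (harmonic ⌊t⌋₊ : ℝ) - Real.log t) atTop
      (𝓝 Real.eulerMascheroniConstant) := by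
  have h := (Real.tendsto_harmonic_sub_log.comp (tendsto_nat_floor_atTop (α := ℝ))).add
    tendsto_log_floor_sub_log
  simpa only [Function.comp, sub_add_sub_cancel, add_zero] using h

lemma hasSum_one_div_add_one_mul_exp {σ : ℝ} (hσ : 0 < σ) :
    HasSum (fun i : ℕ ↦ 1 / ((i : ℝ) + 1) * Real.exp (-(σ * ((i : ℝ) + 1))))
      (-Real.log (1 - Real.exp (-σ))) := by
  have hlt : |Real.exp (-σ)| < 1 := by
    rw [Real.abs_exp]
    exact Real.exp_lt_one_iff.2 (neg_lt_zero.2 hσ)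
  refine (Real.hasSum_pow_div_log_of_abs_lt_one hlt).congr_fun fun i ↦ ?_
  rw [← Real.exp_nat_mul, one_div_mul_eq_div]
  push_cast
  ring_nf

lemma laplaceSummable_one_div_add_one :
    LaplaceSummable (fun i : ℕ ↦ 1 / ((i : ℝ) + 1)) (fun i ↦ (i : ℝ) + 1) where
  weight_nonneg i := by positivity
  point_nonneg i := by positivity
  summable _ hσ := (hasSum_one_div_add_one_mul_exp hσ).summable

lemma tendsto_log_one_sub_exp_neg_sub_log :
    Tendsto (fun σ : ℝ ↦ Real.log (1 - Real.exp (-σ)) - Real.log σ) (𝓝[>] 0) (𝓝 0) := by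
  have hderiv : HasDerivAt (fun σ : ℝ ↦ 1 - Real.exp (-σ)) 1 0 := by
    simpa using (hasDerivAt_neg (0 : ℝ)).exp.const_sub 1
  have hlog := (Real.continuousAt_log one_ne_zero).tendsto.comp hderiv.tendsto_slope_zero_right
  rw [Real.log_one] at hlog
  refine hlog.congr' ?_
  filter_upwards [self_mem_nhdsWithin] with σ (hσ : 0 < σ)
  have hexp : Real.exp (-σ) < 1 := Real.exp_lt_one_iff.2 (neg_lt_zero.2 hσ)
  simp only [Function.comp, zero_add, neg_zero, Real.exp_zero, sub_self, sub_zero, smul_eq_mul]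
  rw [Real.log_mul (by positivity) (by linarith), Real.log_inv]
  ring

lemma summatory_one_div_add_one {t : ℝ} (ht : 0 ≤ t) :
    summatory (fun i : ℕ ↦ 1 / ((i : ℝ) + 1)) (fun i ↦ (i : ℝ) + 1) t = harmonic ⌊t⌋₊ := by
  have hmem (i : ℕ) : (i : ℝ) + 1 ≤ t ↔ i ∈ Finset.range ⌊t⌋₊ := by
    rw [Finset.mem_range, ← Nat.succ_le_iff, Nat.le_floor_iff ht, Nat.cast_succ]
  simp only [summatory, hmem]
  rw [tsum_eq_sum (s := Finset.range ⌊t⌋₊) fun i hi ↦ if_neg hi, harmonic]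
  push_cast
  exact Finset.sum_congr rfl fun i hi ↦ by rw [if_pos hi, one_div]

lemma summatory_primes_log (w : ℕ → ℝ) (t : ℝ) :
    summatory (fun p : Nat.Primes ↦ w p) (fun p ↦ Real.log p) t =
      ∑ p ∈ ⌊Real.exp t⌋₊.primesLE, w p := by
  have hmem (p : Nat.Primes) : Real.log p ≤ t ↔ (p : ℕ) ∈ ⌊Real.exp t⌋₊.primesLE := by
    rw [Nat.mem_primesLE, Real.log_le_iff_le_exp (by exact_mod_cast p.2.pos),
      Nat.le_floor_iff (Real.exp_pos t).le, and_iff_left p.2]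
  simp only [summatory, hmem]
  set f : ℕ → ℝ := fun n ↦ if n ∈ ⌊Real.exp t⌋₊.primesLE then w n else 0
  have hsupport : Function.support f ⊆ Set.range ((↑) : Nat.Primes → ℕ) := fun n hn ↦
    ⟨⟨n, Nat.prime_of_mem_primesLE (by_contra fun h ↦ hn (if_neg h))⟩, rfl⟩
  calc ∑' p : Nat.Primes, f p = ∑' n, f n := Nat.Primes.coe_nat_injective.tsum_eq hsupport
    _ = ∑ n ∈ ⌊Real.exp t⌋₊.primesLE, f n := tsum_eq_sum fun n hn ↦ if_neg hn
    _ = ∑ n ∈ ⌊Real.exp t⌋₊.primesLE, w n := Finset.sum_congr rfl fun n hn ↦ if_pos hn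

-- Both Laplace sums are `-log σ + o(1)`, so the two summatory functions share their constant.
lemma tendsto_sum_primesLE_logEulerFactor_sub_log_log :
    Tendsto (fun N : ℕ ↦ ∑ p ∈ N.primesLE, logEulerFactor p - Real.log (Real.log N)) atTop
      (𝓝 Real.eulerMascheroniConstant) := by
  obtain ⟨M, hM⟩ := exists_tendsto_sum_primesLE_sub_log_log
    (fun _ ↦ one_div_le_logEulerFactor) (fun _ ↦ logEulerFactor_le)
  have hsummatory : Tendsto (fun t ↦
      summatory (fun p : Nat.Primes ↦ logEulerFactor p) (fun p ↦ Real.log p) t -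
        summatory (fun i : ℕ ↦ 1 / ((i : ℝ) + 1)) (fun i ↦ (i : ℝ) + 1) t) atTop
      (𝓝 (M - Real.eulerMascheroniConstant)) := by
    have h := ((hM.comp (tendsto_nat_floor_atTop.comp Real.tendsto_exp_atTop)).add
      tendsto_log_log_floor_exp_sub_log).sub tendsto_harmonic_floor_sub_log
    rw [add_zero] at h
    refine h.congr' ?_
    filter_upwards [eventually_ge_atTop 0] with t ht
    rw [summatory_primes_log, summatory_one_div_add_one ht]
    simp only [Function.comp]
    ring
  have hlaplace := laplaceSummable_logEulerFactor.tendsto_laplaceSum_sub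
    laplaceSummable_one_div_add_one hsummatory
  have hzero := tendsto_laplaceSum_logEulerFactor_add_log.add tendsto_log_one_sub_exp_neg_sub_log
  rw [add_zero] at hzero
  have hM_eq : M - Real.eulerMascheroniConstant = 0 := by
    refine tendsto_nhds_unique hlaplace (hzero.congr' ?_)
    filter_upwards [self_mem_nhdsWithin] with σ hσ
    rw [laplaceSum.eq_def (fun i : ℕ ↦ _), (hasSum_one_div_add_one_mul_exp hσ).tsum_eq]
    ring
  rwa [← sub_eq_zero.1 hM_eq]

lemma tendsto_prod_primesLE_inv_one_sub_one_div_div_log :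
    Tendsto (fun N : ℕ ↦ (∏ p ∈ N.primesLE, (1 - 1 / (p : ℝ))⁻¹) / Real.log N) atTop
      (𝓝 (Real.exp Real.eulerMascheroniConstant)) := by
  refine (Real.continuous_exp.tendsto _ |>.comp
    tendsto_sum_primesLE_logEulerFactor_sub_log_log).congr' ?_
  filter_upwards [eventually_gt_atTop 1] with N hN
  rw [Function.comp, Real.exp_sub, Real.exp_sum, Real.exp_log (Real.log_pos (mod_cast hN))]
  congr 1
  refine Finset.prod_congr rfl fun p hp ↦ ?_
  have hp1 : (1 : ℝ) < p := mod_cast (Nat.prime_of_mem_primesLE hp).one_lt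
  rw [logEulerFactor, Real.exp_neg,
    Real.exp_log (sub_pos.2 ((div_lt_one (by linarith)).2 hp1))]

lemma tendsto_prod_primesLE_one_sub_one_div_sq :
    Tendsto (fun N : ℕ ↦ ∏ p ∈ N.primesLE, (1 - 1 / (p : ℝ) ^ 2)) atTop
      (𝓝 (6 / Real.pi ^ 2)) := by
  have hprod := (EulerProduct.eulerProduct_completely_multiplicative
    (summable_norm_oneDivRpowHom one_lt_two)).comp (tendsto_add_atTop_nat 1)
  have hzeta : ∑' n, oneDivRpowHom 2 two_ne_zero n = Real.pi ^ 2 / 6 := by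
    rw [← hasSum_zeta_two.tsum_eq]
    exact tsum_congr fun n ↦ by simp [oneDivRpowHom]
  rw [hzeta] at hprod
  have hinv := hprod.inv₀ (by positivity)
  rw [inv_div] at hinv
  refine hinv.congr fun N ↦ ?_
  simp [oneDivRpowHom, Nat.primesLE]

lemma tendsto_prod_primesLE_one_add_one_div_div_log :
    Tendsto (fun N : ℕ ↦ (∏ p ∈ N.primesLE, (1 + 1 / (p : ℝ))) / Real.log N) atTop
      (𝓝 (Real.exp Real.eulerMascheroniConstant * (6 / Real.pi ^ 2))) := by
  refine (tendsto_prod_primesLE_inv_one_sub_one_div_div_log.mul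
    tendsto_prod_primesLE_one_sub_one_div_sq).congr fun N ↦ ?_
  rw [div_mul_eq_mul_div, ← Finset.prod_mul_distrib]
  congr 1
  refine Finset.prod_congr rfl fun p hp ↦ ?_
  have hp1 : (1 : ℝ) < p := mod_cast (Nat.prime_of_mem_primesLE hp).one_lt
  have hp1' : (p : ℝ) - 1 ≠ 0 := by linarith
  field_simp
  ring

end MertensThird

section SquarefreeSmoothNumbers

lemma prime_nthPrime (j : ℕ) : (nthPrime j).Prime := Nat.prime_nth_prime j

lemma nthPrime_strictMono : StrictMono nthPrime := Nat.nth_strictMono Nat.infinite_setOfPred_prime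

lemma exists_nthPrime_eq {p : ℕ} (hp : p.Prime) : ∃ j, nthPrime j = p := ⟨_, Nat.nth_count hp⟩

lemma tendsto_nthPrime_sub_one_atTop : Tendsto (fun m ↦ nthPrime (m - 1)) atTop atTop :=
  nthPrime_strictMono.tendsto_atTop.comp (tendsto_sub_atTop_nat 1)

variable {m : ℕ}

lemma nthPrime_le_nthPrime_sub_one_iff (hm : 0 < m) {j : ℕ} :
    nthPrime j ≤ nthPrime (m - 1) ↔ j < m := by
  rw [nthPrime_strictMono.le_iff_le, Nat.le_sub_one_iff_lt hm]

lemma image_nthPrime_range (hm : 0 < m) :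
    (Finset.range m).image nthPrime = (nthPrime (m - 1)).primesLE := by
  ext p
  simp only [Finset.mem_image, Finset.mem_range, Nat.mem_primesLE]
  constructor
  · rintro ⟨j, hj, rfl⟩
    exact ⟨(nthPrime_le_nthPrime_sub_one_iff hm).2 hj, prime_nthPrime j⟩
  · rintro ⟨hle, hp⟩
    obtain ⟨j, rfl⟩ := exists_nthPrime_eq hp
    exact ⟨j, (nthPrime_le_nthPrime_sub_one_iff hm).1 hle, rfl⟩

lemma Zm_eq_prod_primesLE (hm : 0 < m) :
    Zm m = ∏ p ∈ (nthPrime (m - 1)).primesLE, (1 + 1 / (p : ℝ)) := by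
  rw [Zm, ← image_nthPrime_range hm, Finset.prod_image nthPrime_strictMono.injective.injOn]

lemma tendsto_Zm_div_log_nthPrime :
    Tendsto (fun m ↦ Zm m / Real.log (nthPrime (m - 1))) atTop
      (𝓝 (Real.exp Real.eulerMascheroniConstant * (6 / Real.pi ^ 2))) := by
  refine (tendsto_prod_primesLE_one_add_one_div_div_log.comp
    tendsto_nthPrime_sub_one_atTop).congr' ?_
  filter_upwards [eventually_gt_atTop 0] with m hm
  rw [Zm_eq_prod_primesLE hm, Function.comp]

lemma prime_dvd_elt_iff {p : ℕ} (hp : p.Prime) (ν : Fin m → Bool) :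
    p ∣ elt m ν ↔ ∃ j, ν j ∧ nthPrime j = p := by
  have hfactor (j : Fin m) : (p ∣ if ν j then nthPrime j else 1) ↔ ν j ∧ nthPrime j = p := by
    split_ifs with hj
    · rw [Nat.prime_dvd_prime_iff_eq hp (prime_nthPrime j), eq_comm, and_iff_right hj]
    · simp [hp.one_lt.ne', hj]
  simp only [elt, hp.prime.dvd_finsetProd_iff, hfactor, Finset.mem_univ, true_and]

lemma nthPrime_dvd_elt_iff (ν : Fin m → Bool) (i : Fin m) : nthPrime i ∣ elt m ν ↔ ν i := by
  simp [prime_dvd_elt_iff (prime_nthPrime i), nthPrime_strictMono.injective.eq_iff, Fin.val_inj]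

lemma elt_injective : Function.Injective (elt m) := fun ν ν' h ↦ funext fun i ↦
  Bool.eq_iff_iff.2 <| by rw [← nthPrime_dvd_elt_iff, h, nthPrime_dvd_elt_iff]

lemma squarefree_elt (ν : Fin m → Bool) : Squarefree (elt m ν) := by
  rw [elt, ← Finset.prod_filter]
  refine Finset.squarefree_prod_of_pairwise_isCoprime (fun i _ j _ hij ↦ ?_)
    fun j _ ↦ (prime_nthPrime j).prime.squarefree
  rw [Function.onFun, ← Nat.coprime_iff_isRelPrime,
    Nat.coprime_primes (prime_nthPrime i) (prime_nthPrime j)]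
  exact fun h ↦ hij (Fin.ext (nthPrime_strictMono.injective h))

lemma exists_elt_eq {n : ℕ} (hn : Squarefree n) (hm : 0 < m) (hle : n ≤ nthPrime (m - 1)) :
    ∃ ν, elt m ν = n := by
  refine ⟨fun j ↦ decide (nthPrime j ∣ n),
    (Nat.Squarefree.ext_iff (squarefree_elt _) hn).2 fun p hp ↦ ?_⟩
  simp only [prime_dvd_elt_iff hp, decide_eq_true_eq]
  constructor
  · rintro ⟨j, hj, rfl⟩
    exact hj
  · intro hpn
    obtain ⟨j, rfl⟩ := exists_nthPrime_eq hp
    have hj : nthPrime j ≤ nthPrime (m - 1) :=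
      (Nat.le_of_dvd (Nat.pos_of_ne_zero hn.ne_zero) hpn).trans hle
    exact ⟨⟨j, (nthPrime_le_nthPrime_sub_one_iff hm).1 hj⟩, hpn, rfl⟩

lemma sum_mass_elt_le (hm : 0 < m) {x : ℝ} (hx0 : 0 ≤ x) (hx : x ≤ nthPrime (m - 1)) :
    ∑ ν with (elt m ν : ℝ) ≤ x, mass m ν = squarefreeHarmonic ⌊x⌋₊ / Zm m := by
  have himage : (Finset.univ.filter fun ν ↦ (elt m ν : ℝ) ≤ x).image (elt m) =
      (Finset.Icc 1 ⌊x⌋₊).filter Squarefree := by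
    ext n
    simp only [Finset.mem_image, Finset.mem_filter, Finset.mem_univ, true_and, Finset.mem_Icc]
    constructor
    · rintro ⟨ν, hν, rfl⟩
      exact ⟨⟨Nat.pos_of_ne_zero (squarefree_elt ν).ne_zero, Nat.le_floor hν⟩, squarefree_elt ν⟩
    · rintro ⟨⟨-, hle⟩, hn⟩
      have hnx : (n : ℝ) ≤ x := (Nat.le_floor_iff hx0).1 hle
      obtain ⟨ν, rfl⟩ := exists_elt_eq hn hm (mod_cast hnx.trans hx)
      exact ⟨ν, hnx, rfl⟩
  rw [squarefreeHarmonic, ← himage, Finset.sum_image elt_injective.injOn, Finset.sum_div]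
  exact Finset.sum_congr rfl fun ν _ ↦ by rw [mass, one_div, mul_inv_rev, div_eq_mul_inv]

end SquarefreeSmoothNumbers

/-- `Π_m{ n ≤ p_m^s } → e^{-γ} s` as `m → ∞`, for `0 < s ≤ 1`. -/
theorem mass_below_pm_pow_s (s : ℝ) (hs0 : 0 < s) (hs1 : s ≤ 1) :
    Tendsto (fun m : ℕ =>
        ∑ ν ∈ Finset.univ.filter
            (fun ν : Fin m → Bool => (elt m ν : ℝ) ≤ (nthPrime (m - 1) : ℝ) ^ s),
          mass m ν)
      atTop (𝓝 (Real.exp (-Real.eulerMascheroniConstant) * s)) := by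
  have hpow : Tendsto (fun m : ℕ ↦ (nthPrime (m - 1) : ℝ) ^ s) atTop atTop :=
    (tendsto_rpow_atTop hs0).comp
      (tendsto_natCast_atTop_atTop.comp tendsto_nthPrime_sub_one_atTop)
  have hlim := ((tendsto_squarefreeHarmonic_floor_div_log.comp hpow).mul_const s).div
    tendsto_Zm_div_log_nthPrime (by positivity)
  have hconst : 6 / Real.pi ^ 2 * s / (Real.exp Real.eulerMascheroniConstant * (6 / Real.pi ^ 2)) =
      Real.exp (-Real.eulerMascheroniConstant) * s := by
    rw [Real.exp_neg]
    field_simp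
  rw [hconst] at hlim
  refine hlim.congr' ?_
  filter_upwards [eventually_gt_atTop 0] with m hm
  have hp : (1 : ℝ) < nthPrime (m - 1) := mod_cast (prime_nthPrime _).one_lt
  have hlog : Real.log (nthPrime (m - 1)) ≠ 0 := (Real.log_pos hp).ne'
  have hle : (nthPrime (m - 1) : ℝ) ^ s ≤ nthPrime (m - 1) :=
    Real.rpow_le_self_of_one_le hp.le hs1
  rw [sum_mass_elt_le hm (by positivity) hle]
  simp only [Pi.div_apply, Function.comp]
  rw [Real.log_rpow (by linarith)]
  field_simp

end
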